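/- Let (𝒜_ξ)_{ξ ∈ I} be a family of AD-families on ℕ indexed by a set I of cardinality at most 𝔠. Then there is an AD-family 𝒞 on ℕ such that F_{𝒜_ξ} <_RK F_𝒞 for every ξ ∈ I. -/

import Mathlib

open Set

/-- `f[G] = {A : f⁻¹(A) ∈ G}`, the image (Rudin–Keisler) filter of a family of sets. -/
def mapFilter {α β : Type*} (f : α → β) (G : Set (Set α)) : Set (Set β) := {A | f ⁻¹' A ∈ G}

/-- `F` is a (proper) filter of subsets. -/
def IsFilterFam {α : Type*} (F : Set (Set α)) : Prop :=
  Set.univ ∈ F ∧ (∀ A ∈ F, ∀ B : Set α, A ⊆ B → B ∈ F) ∧ (∀ A ∈ F, ∀ B ∈ F, A ∩ B ∈ F)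

/-- A free filter: a proper filter containing all cofinite sets. -/
def IsFreeFilter {α : Type*} (F : Set (Set α)) : Prop :=
  IsFilterFam F ∧ (∀ A : Set α, Aᶜ.Finite → A ∈ F) ∧ ∅ ∉ F

/-- `S → F` : `S` is an infinite set converging to the filter `F`, i.e. `S ⊆* A` for all `A ∈ F`. -/
def ConvTo {α : Type*} (S : Set α) (F : Set (Set α)) : Prop :=
  S.Infinite ∧ ∀ A ∈ F, (S \ A).Finite

/-- `F` is relatively equivalent to the Fréchet filter: some `A ∈ F` converges to `F`. -/
def RelFrechet {α : Type*} (F : Set (Set α)) : Prop := ∃ A ∈ F, ConvTo A F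

/-- Rudin–Keisler order: `F ≤_RK G` iff `f[G] = F` for some surjection `f`. -/
def RKle {α : Type*} (F G : Set (Set α)) : Prop :=
  ∃ f : α → α, Function.Surjective f ∧ mapFilter f G = F

/-- `F ≈ G` : there is a bijection `f` with `f[F] = G`. -/
def EquivFilter {α : Type*} (F G : Set (Set α)) : Prop :=
  ∃ f : α → α, Function.Bijective f ∧ mapFilter f F = G

/-- `F <_RK G` : `F ≤_RK G` and `¬ (F ≈ G)`. -/
def RKlt {α : Type*} (F G : Set (Set α)) : Prop := RKle F G ∧ ¬ EquivFilter F G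

/-- An AD-family: an infinite family of infinite sets with pairwise finite intersections. -/
def IsADFamily {α : Type*} (𝒜 : Set (Set α)) : Prop :=
  𝒜.Infinite ∧ (∀ A ∈ 𝒜, A.Infinite) ∧ ∀ A ∈ 𝒜, ∀ B ∈ 𝒜, A ≠ B → (A ∩ B).Finite

/-- The ideal generated by a family `𝒜`: sets almost covered by finitely many members of `𝒜`. -/
def idealGen {α : Type*} (𝒜 : Set (Set α)) : Set (Set α) :=
  {X | ∃ 𝒜' : Finset (Set α), ↑𝒜' ⊆ 𝒜 ∧ (X \ ⋃₀ ↑𝒜').Finite}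

/-- `S_𝒜`: the filter dual to the ideal generated by `𝒜`. -/
def SFam {α : Type*} (𝒜 : Set (Set α)) : Set (Set α) := {F | Fᶜ ∈ idealGen 𝒜}

/-- `F_𝒟 = {F : D ⊆* F for every D ∈ 𝒟}`. -/
def FFam {α : Type*} (𝒟 : Set (Set α)) : Set (Set α) := {F | ∀ D ∈ 𝒟, (D \ F).Finite}

/-- A nowhere MAD family: every set outside the generated ideal contains an infinite set
almost disjoint from every member of `𝒜`. -/
def IsNMAD {α : Type*} (𝒜 : Set (Set α)) : Prop :=
  IsADFamily 𝒜 ∧ ∀ X : Set α, X ∉ idealGen 𝒜 →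
    ∃ B ⊆ X, B.Infinite ∧ ∀ A ∈ 𝒜, (B ∩ A).Finite

/-- A partition of `ℕ` into infinitely many infinite sets. -/
def IsInfPartition (𝒬 : Set (Set ℕ)) : Prop :=
  𝒬.Infinite ∧ (∀ P ∈ 𝒬, P.Infinite) ∧ ⋃₀ 𝒬 = Set.univ ∧
    ∀ P ∈ 𝒬, ∀ Q ∈ 𝒬, P ≠ Q → P ∩ Q = ∅

/-- `F` is a Fréchet–Urysohn filter: every `F`-positive set contains a sequence converging to `F`. -/
def IsFUFilter {α : Type*} (F : Set (Set α)) : Prop :=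
  ∀ A : Set α, Aᶜ ∉ F → ∃ S ⊆ A, ConvTo S F

/-- The trace filter `F|_A = {G ∩ A : G ∈ F}`. -/
def traceFam {α : Type*} (F : Set (Set α)) (A : Set α) : Set (Set α) := {S | ∃ G ∈ F, S = G ∩ A}

/-- Todorčević–Uzcátegui order: there are `A ∈ G⁺`, `B ∈ F` and a bijection `f : A → B`
with `f[G|_A] = F|_B`. -/
def TUle {α : Type*} (F G : Set (Set α)) : Prop :=
  ∃ A : Set α, Aᶜ ∉ G ∧ ∃ B ∈ F, ∃ f : α → α, Set.BijOn f A B ∧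
    {Y : Set α | Y ⊆ B ∧ A ∩ f ⁻¹' Y ∈ traceFam G A} = traceFam F B

/-!
Place a copy of every `𝒜 ξ` on the graph of a function `r ξ`, where the functions `r` are pairwise
eventually different, so that the copies do not interfere; there are continuum many such functions.
Projecting the graph of `r ξ` to its base, and everything else onto one member of `𝒜 ξ`, maps the
filter of the union to that of `𝒜 ξ`. For strictness one diagonalizes: a set `𝒢` of sets that the
filter should differ from receives a fresh graph, which is thrown in as a new member exactly when
its complement lies in `𝒢`. The finite families have only continuum many filters; avoiding these
too makes the union infinite.
-/

/-- An almost disjoint family of infinite sets, i.e. an AD-family that is allowed to be finite. -/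
def IsAlmostDisjoint {α : Type*} (𝒜 : Set (Set α)) : Prop :=
  (∀ A ∈ 𝒜, A.Infinite) ∧ ∀ A ∈ 𝒜, ∀ B ∈ 𝒜, A ≠ B → (A ∩ B).Finite

/-- Any two distinct functions of the family `r` agree at only finitely many arguments. -/
def EventuallyDifferent {K : Type*} (r : K → ℕ → ℕ) : Prop :=
  Pairwise fun k l => {n | r k n = r l n}.Finite

/-- The part of the graph of `r` over `B`, coded as a subset of `ℕ` by the pairing function. -/
def graphOver (r : ℕ → ℕ) (B : Set ℕ) : Set ℕ := (fun n => Nat.pair n (r n)) '' B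

/-- The union of copies of the families `ℬ k`, the copy of `ℬ k` living on the graph of `r k`. -/
def amalgam {K : Type*} (r : K → ℕ → ℕ) (ℬ : K → Set (Set ℕ)) : Set (Set ℕ) :=
  ⋃ k, graphOver (r k) '' ℬ k

theorem exists_eventuallyDifferent {K : Type*} (hK : Cardinal.mk K ≤ Cardinal.continuum) :
    ∃ r : K → ℕ → ℕ, EventuallyDifferent r := by
  obtain ⟨c⟩ : Nonempty (K ↪ (ℕ → Bool)) := Cardinal.lift_mk_le'.1 (by simpa using hK)
  -- Branches of the binary tree, coded by initial segments, never meet again once they split.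
  refine ⟨fun k n => Encodable.encode ((List.range n).map (c k)), fun k l hkl => ?_⟩
  obtain ⟨i, hi⟩ : ∃ i, c k i ≠ c l i := Function.ne_iff.1 (c.injective.ne hkl)
  refine (Set.finite_Iic i).subset fun n hn => mem_Iic.2 <| not_lt.1 fun hin => hi ?_
  exact List.map_inj_left.1 (Encodable.encode_injective hn) i (List.mem_range.2 hin)

section GraphOver

variable {r s : ℕ → ℕ} {B B' F : Set ℕ}

theorem pair_graph_injective (r : ℕ → ℕ) : Function.Injective fun n => Nat.pair n (r n) :=
  fun _ _ h => (Nat.pair_eq_pair.1 h).1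

theorem graphOver_infinite (hB : B.Infinite) : (graphOver r B).Infinite :=
  hB.image (pair_graph_injective r).injOn

theorem graphOver_inter_graphOver : graphOver r B ∩ graphOver r B' = graphOver r (B ∩ B') :=
  (image_inter (pair_graph_injective r)).symm

theorem graphOver_sdiff_finite_iff :
    (graphOver r B \ F).Finite ↔ {n ∈ B | Nat.pair n (r n) ∉ F}.Finite := by
  rw [graphOver, ← image_sdiff_preimage, finite_image_iff (pair_graph_injective r).injOn]
  rfl

theorem graphOver_inter_finite (h : {n | r n = s n}.Finite) :
    (graphOver r B ∩ graphOver s B').Finite := by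
  refine (h.image fun n => Nat.pair n (r n)).subset ?_
  rintro _ ⟨⟨n, -, rfl⟩, ⟨m, -, hm⟩⟩
  obtain ⟨rfl, h_eq⟩ := Nat.pair_eq_pair.1 hm
  exact ⟨m, h_eq.symm, rfl⟩

end GraphOver

section Amalgam

variable {K : Type*} {r : K → ℕ → ℕ} {ℬ : K → Set (Set ℕ)}

theorem mem_amalgam {S : Set ℕ} : S ∈ amalgam r ℬ ↔ ∃ k, ∃ B ∈ ℬ k, graphOver (r k) B = S :=
  mem_iUnion

theorem mem_FFam_amalgam {F : Set ℕ} :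
    F ∈ FFam (amalgam r ℬ) ↔ ∀ k, ∀ B ∈ ℬ k, (graphOver (r k) B \ F).Finite := by
  simp only [FFam, mem_ofPred_eq, mem_amalgam]
  grind

theorem isAlmostDisjoint_amalgam (hr : EventuallyDifferent r)
    (hℬ : ∀ k, IsAlmostDisjoint (ℬ k)) : IsAlmostDisjoint (amalgam r ℬ) := by
  simp only [IsAlmostDisjoint, mem_amalgam]
  constructor
  · rintro _ ⟨k, B, hB, rfl⟩
    exact graphOver_infinite ((hℬ k).1 B hB)
  · rintro _ ⟨k, B, hB, rfl⟩ _ ⟨l, B', hB', rfl⟩ hne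
    obtain rfl | hkl := eq_or_ne k l
    · rw [graphOver_inter_graphOver]
      exact ((hℬ k).2 B hB B' hB' (ne_of_apply_ne _ hne)).image _
    · exact graphOver_inter_finite (hr hkl)

theorem rkle_FFam_amalgam (hr : EventuallyDifferent r) {k : K} {E : Set ℕ} (hE : E ∈ ℬ k)
    (hE_inf : E.Infinite) : RKle (FFam (ℬ k)) (FFam (amalgam r ℬ)) := by
  obtain ⟨e, he_inj, he_mem⟩ : ∃ e : ℕ → ℕ, Function.Injective e ∧ ∀ n, e n ∈ E :=
    ⟨fun n => hE_inf.natEmbedding E n,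
      Subtype.val_injective.comp (hE_inf.natEmbedding E).injective, fun n => Subtype.prop _⟩
  let f : ℕ → ℕ := fun x =>
    if x.unpair.2 = r k x.unpair.1 then x.unpair.1 else e x.unpair.1
  have hf_self (n : ℕ) : f (Nat.pair n (r k n)) = n := by simp [f]
  have hf_of_ne {l : K} {n : ℕ} (hn : r l n ≠ r k n) : f (Nat.pair n (r l n)) = e n := by
    simp [f, hn]
  have h_sdiff (B A : Set ℕ) : (graphOver (r k) B \ f ⁻¹' A).Finite ↔ (B \ A).Finite := by
    simp only [graphOver_sdiff_finite_iff, mem_preimage, hf_self]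
    rfl
  refine ⟨f, fun n => ⟨_, hf_self n⟩, Set.ext fun A => ?_⟩
  refine mem_FFam_amalgam.trans ⟨fun hA B hB => (h_sdiff B A).1 (hA k B hB), fun hA l B hB => ?_⟩
  obtain rfl | hlk := eq_or_ne l k
  · exact (h_sdiff B A).2 (hA B hB)
  · have h_exceptions : (e ⁻¹' (E \ A)).Finite := (hA E hE).preimage he_inj.injOn
    refine graphOver_sdiff_finite_iff.2 (((hr hlk).union h_exceptions).subset fun n hn => ?_)
    refine or_iff_not_imp_left.2 fun h_ne => ⟨he_mem n, ?_⟩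
    simpa only [mem_preimage, hf_of_ne h_ne] using hn.2

theorem compl_graphOver_univ_mem_FFam_amalgam_iff (hr : EventuallyDifferent r) (k : K) :
    (graphOver (r k) univ)ᶜ ∈ FFam (amalgam r ℬ) ↔ ∀ B ∈ ℬ k, B.Finite := by
  rw [mem_FFam_amalgam]
  simp only [sdiff_compl]
  constructor
  · intro h B hB
    have h_finite := h k B hB
    rw [graphOver_inter_graphOver, inter_univ] at h_finite
    exact not_infinite.1 fun hB_inf => graphOver_infinite hB_inf h_finite
  · intro h l B hB
    obtain rfl | hlk := eq_or_ne l k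
    · rw [graphOver_inter_graphOver, inter_univ]
      exact (h B hB).image _
    · exact graphOver_inter_finite (hr hlk)

end Amalgam

theorem exists_isAlmostDisjoint_rkle_and_ne {I J : Type*} (hI : Cardinal.mk I ≤ Cardinal.continuum)
    (hJ : Cardinal.mk J ≤ Cardinal.continuum) (𝒜 : I → Set (Set ℕ))
    (h𝒜 : ∀ ξ, IsAlmostDisjoint (𝒜 ξ)) (h_nonempty : ∀ ξ, (𝒜 ξ).Nonempty)
    (𝒢 : J → Set (Set ℕ)) :
    ∃ 𝒞 : Set (Set ℕ), IsAlmostDisjoint 𝒞 ∧ (∀ ξ, RKle (FFam (𝒜 ξ)) (FFam 𝒞)) ∧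
      ∀ j, FFam 𝒞 ≠ 𝒢 j := by
  have hK : Cardinal.mk (I ⊕ J) ≤ Cardinal.continuum := by
    rw [Cardinal.mk_sum]
    exact Cardinal.add_le_of_le Cardinal.aleph0_le_continuum
      (Cardinal.lift_le_continuum.2 hI) (Cardinal.lift_le_continuum.2 hJ)
  obtain ⟨r, hr⟩ := exists_eventuallyDifferent hK
  let 𝒟 : J → Set (Set ℕ) := fun j => {B | B = univ ∧ (graphOver (r (.inr j)) univ)ᶜ ∈ 𝒢 j}
  have h𝒟 (j : J) : IsAlmostDisjoint (𝒟 j) :=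
    ⟨fun B hB => hB.1 ▸ infinite_univ, fun B hB B' hB' hne => absurd (hB.1.trans hB'.1.symm) hne⟩
  refine ⟨amalgam r (Sum.elim 𝒜 𝒟), isAlmostDisjoint_amalgam hr (Sum.rec h𝒜 h𝒟), fun ξ => ?_,
    fun j h_eq => ?_⟩
  · obtain ⟨E, hE⟩ := h_nonempty ξ
    exact rkle_FFam_amalgam (ℬ := Sum.elim 𝒜 𝒟) (k := .inl ξ) hr hE ((h𝒜 ξ).1 E hE)
  · have h_iff := compl_graphOver_univ_mem_FFam_amalgam_iff (ℬ := Sum.elim 𝒜 𝒟) hr (.inr j)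
    have h_diagonal : (∀ B ∈ 𝒟 j, B.Finite) ↔ (graphOver (r (.inr j)) univ)ᶜ ∉ 𝒢 j :=
      ⟨fun h h_mem => infinite_univ (h univ ⟨rfl, h_mem⟩), fun h _ hB => absurd hB.2 h⟩
    rw [h_eq] at h_iff
    exact iff_not_self (h_iff.trans h_diagonal)

theorem statement12_general {I : Type*} (hI : Cardinal.mk I ≤ Cardinal.continuum)
    (𝒜 : I → Set (Set ℕ)) (h𝒜 : ∀ ξ, IsAlmostDisjoint (𝒜 ξ))
    (h_nonempty : ∀ ξ, (𝒜 ξ).Nonempty) :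
    ∃ 𝒞 : Set (Set ℕ), IsADFamily 𝒞 ∧
      ∀ ξ, RKle (FFam (𝒜 ξ)) (FFam 𝒞) ∧ ∀ f : ℕ → ℕ, mapFilter f (FFam (𝒜 ξ)) ≠ FFam 𝒞 := by
  have hJ : Cardinal.mk ((I × (ℕ → ℕ)) ⊕ Finset (Set ℕ)) ≤ Cardinal.continuum := by
    have h_prod : Cardinal.mk (I × (ℕ → ℕ)) ≤ Cardinal.continuum := by
      simpa using Cardinal.mul_le_of_le Cardinal.aleph0_le_continuum hI le_rfl
    simpa using Cardinal.add_le_of_le Cardinal.aleph0_le_continuum h_prod le_rfl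
  obtain ⟨𝒞, h𝒞, h_above, h_ne⟩ := exists_isAlmostDisjoint_rkle_and_ne hI hJ 𝒜 h𝒜 h_nonempty
    (Sum.elim (fun p => mapFilter p.2 (FFam (𝒜 p.1))) fun 𝒟 => FFam (𝒟 : Set (Set ℕ)))
  have h_infinite : 𝒞.Infinite := fun h_fin =>
    h_ne (.inr h_fin.toFinset) (congrArg FFam h_fin.coe_toFinset.symm)
  exact ⟨𝒞, ⟨h_infinite, h𝒞⟩, fun ξ => ⟨h_above ξ, fun f => (h_ne (.inl (ξ, f))).symm⟩⟩

/-- For any family of at most continuum many AD-families there is an AD-family `𝒞` with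
`F_{𝒜_ξ} <_RK F_𝒞` for every `ξ`. -/
theorem statement12 (I : Type) (hI : Cardinal.mk I ≤ Cardinal.continuum)
    (𝒜 : I → Set (Set ℕ)) (h𝒜 : ∀ ξ : I, IsADFamily (𝒜 ξ)) :
    ∃ 𝒞 : Set (Set ℕ), IsADFamily 𝒞 ∧ ∀ ξ : I, RKlt (FFam (𝒜 ξ)) (FFam 𝒞) := by
  obtain ⟨𝒞, h𝒞, h⟩ := statement12_general hI 𝒜 (fun ξ => (h𝒜 ξ).2) fun ξ => (h𝒜 ξ).1.nonempty
  exact ⟨𝒞, h𝒞, fun ξ => ⟨(h ξ).1, fun ⟨f, _, hf⟩ => (h ξ).2 f hf⟩⟩
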